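/- arXiv:2411.07125 — 2 statements merged into one kernel-verified Lean document; each statement's English description precedes it below -/
import Mathlib

section
/- For every δ₄ with 0 < δ₄ < 1 there exist α₄ > 0 and N ∈ ℕ such that for every n ≥ N, with probability at least 1 − δ₄ over the random l: for every sign pattern b ∈ {−1,1}^k and every y ∈ Y_m^b there exist y', y'' ∈ Y_m^b and integers t', t'' with 0 < t' < α₄ · s and 0 < t'' < α₄ · s such that f_l(y) − f_l(y') = t' mod n and f_l(y'') − f_l(y) = t'' mod n; that is, every mapped point of Y_m^b has mapped neighbors on both sides at distance of order the standard distance s. -/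
/-!
The proof is a first-moment argument with finite Fourier analysis on `ZMod n`.

Put `M = ⌈m / 2⌉` and `L = ⌊α s / 2⌋`. Every vector `b · (u + v)` with `uᵢ, vᵢ ∈ [0, M)` lies in
`Y_m^b`, and every `p + q + 1` with `p, q ∈ [0, L)` lies in `(0, α s)`. So it suffices to represent
`f_l(y) - 1` as `f_l(b · (u + v)) + (p + q)` and `f_l(y) + 1` as `f_l(b · (u + v)) - (p + q)`.
With the Dirichlet kernel `D_M(x) = ∑_{u < M} e(u x / n)`, the number of representations of any
residue, times `n`, is `M^{2k} L²` (the frequency `j = 0`) plus an error of absolute value at most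
`S(l) = ∑_{j ≠ 0} ∏ᵢ |D_M(j lᵢ)|² |D_L(j)|²`. Since `S(l)` depends neither on `y` nor on `b`, the
single event `S(l) < M^{2k} L²` gives all neighbours at once (`exists_representation`).

The mean of `S` splits over `j` (`sum_fourierTail_le`). If no `0 < d < M` satisfies `d j = 0`, the
mean of `|D_M(j x)|²` over `x` is exactly `M` by orthogonality; by Parseval these `j` contribute at
most `M^k n L` in total. If `d j = 0` for such a `d`, then `|D_L(j)| ≤ d ≤ M` by periodicity; these
`j` contribute at most `n M^{2k+2}`. Divided by `M^{2k} L²` the two bounds are of order `1 / α` and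
`m^{2k+2} / (n α²)`, and `m^{2k+2} = O(n)` by the choice of `m`, so Markov's inequality
(`one_sub_le_lProb`) concludes for `α` large.
-/

open scoped BigOperators

noncomputable section

attribute [local instance 10] Classical.propDecidable

/-- Cycle distance on `ZMod n`: `min(r, n - r)` where `r` is the representative of `y - x`. -/
def cycleDist (n : ℕ) [NeZero n] (x y : ZMod n) : ℕ :=
  min (y - x).val (n - (y - x).val)

/-- `f_l(y) = Σ yᵢ lᵢ` in `ZMod n`. -/
def fl {n k : ℕ} [NeZero n] (l : Fin k → ZMod n) (y : Fin k → ℤ) : ZMod n :=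
  ∑ i, (y i : ZMod n) * l i

/-- Probability of `E` when `l₁,…,l_k` are independent uniform elements of `ZMod n`,
modelled as a uniform element of the product space. -/
def lProb (n k : ℕ) [NeZero n] (E : (Fin k → ZMod n) → Prop) : ℝ :=
  ((Finset.univ.filter E).card : ℝ) / (Fintype.card (Fin k → ZMod n) : ℝ)

/-- `b` is a sign pattern in `{-1,1}^k`. -/
def IsSign {k : ℕ} (b : Fin k → ℤ) : Prop := ∀ i, b i = 1 ∨ b i = -1

/-- Membership in `Y_m^b = {y ∈ ℤ^k : 0 ≤ bᵢ yᵢ < m}`. -/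
def inYmb {k : ℕ} (b : Fin k → ℤ) (m : ℕ) (y : Fin k → ℤ) : Prop :=
  ∀ i, 0 ≤ b i * y i ∧ b i * y i < (m : ℤ)

/-- `m = m(n) = ⌈c n^{1/(2k+2)}⌉`. -/
def mOf (k : ℕ) (c : ℝ) (n : ℕ) : ℕ := ⌈c * (n : ℝ) ^ ((1 : ℝ) / (2 * (k : ℝ) + 2))⌉₊

/-- The standard distance `s = s(n) = n / m^k`. -/
def sOf (k : ℕ) (c : ℝ) (n : ℕ) : ℝ := (n : ℝ) / (mOf k c n : ℝ) ^ k

/-! ### Dirichlet kernels on `ZMod n` -/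

/-- The Dirichlet kernel `D_M(x) = ∑_{u < M} e(u x / n)` on `ZMod n`, written as a geometric sum
in the value at `x` of the standard additive character. -/
def dirichletSum {n : ℕ} [NeZero n] (M : ℕ) (x : ZMod n) : ℂ :=
  ∑ u ∈ Finset.range M, (ZMod.stdAddChar x : ℂ) ^ u

lemma stdAddChar_natCast_mul {n : ℕ} [NeZero n] (u : ℕ) (x : ZMod n) :
    (ZMod.stdAddChar ((u : ZMod n) * x) : ℂ) = ZMod.stdAddChar x ^ u := by
  rw [← AddChar.map_nsmul_eq_pow, nsmul_eq_mul]

lemma dirichletSum_eq {n : ℕ} [NeZero n] (M : ℕ) (x : ZMod n) :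
    dirichletSum M x = ∑ u ∈ Finset.range M, (ZMod.stdAddChar ((u : ZMod n) * x) : ℂ) := by
  simp only [dirichletSum, stdAddChar_natCast_mul]

lemma dirichletSum_zero {n : ℕ} [NeZero n] (M : ℕ) :
    dirichletSum M (0 : ZMod n) = M := by
  simp [dirichletSum]

lemma norm_dirichletSum_neg {n : ℕ} [NeZero n] (M : ℕ) (x : ZMod n) :
    ‖dirichletSum M (-x)‖ = ‖dirichletSum M x‖ := by
  have : dirichletSum M (-x) = (starRingEnd ℂ) (dirichletSum M x) := by
    simp only [dirichletSum, map_sum, map_pow, AddChar.map_neg_eq_conj]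
  rw [this, RCLike.norm_conj]

lemma norm_dirichletSum_sign_mul {n : ℕ} [NeZero n] (M : ℕ) (σ : ℤ) (hσ : σ = 1 ∨ σ = -1)
    (x : ZMod n) : ‖dirichletSum M ((σ : ZMod n) * x)‖ = ‖dirichletSum M x‖ := by
  rcases hσ with rfl | rfl
  · simp
  · simp [norm_dirichletSum_neg]

lemma norm_dirichletSum_le {n : ℕ} [NeZero n] (M : ℕ) (x : ZMod n) :
    ‖dirichletSum M x‖ ≤ M := by
  refine (norm_sum_le _ _).trans ?_
  simp [AddChar.norm_apply]

/-- If `x ≠ 0` is killed by `d ≥ 1`, the terms of the Dirichlet kernel at `x` have period `d` and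
cancel over full periods, so the kernel is at most `d` whatever its length. -/
lemma norm_dirichletSum_le_of_mul_eq_zero {n : ℕ} [NeZero n] (L d : ℕ) (hd : 0 < d) (x : ZMod n)
    (hx : x ≠ 0) (hdx : (d : ZMod n) * x = 0) : ‖dirichletSum L x‖ ≤ d := by
  have hz : (ZMod.stdAddChar x : ℂ) ≠ 1 := by
    intro h
    apply hx
    apply ZMod.injective_stdAddChar
    rw [h, AddChar.map_zero_eq_one]
  have hzd : (ZMod.stdAddChar x : ℂ) ^ d = 1 := by
    rw [← stdAddChar_natCast_mul, hdx, AddChar.map_zero_eq_one]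
  have hmod : dirichletSum L x = dirichletSum (L % d) x := by
    unfold dirichletSum
    rw [geom_sum_eq hz, geom_sum_eq hz]
    congr 2
    conv_lhs => rw [← Nat.mod_add_div L d, pow_add, pow_mul, hzd, one_pow, mul_one]
  rw [hmod]
  refine (norm_dirichletSum_le _ _).trans ?_
  exact_mod_cast (Nat.mod_lt L hd).le

/-- Parseval for the Dirichlet kernel along the multiples of `j`: only the diagonal terms survive
when no positive integer below `M` kills `j`. -/
lemma sum_norm_dirichletSum_sq {n : ℕ} [NeZero n] (M : ℕ) (j : ZMod n)
    (hj : ∀ d : ℕ, 0 < d → d < M → (d : ZMod n) * j ≠ 0) :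
    ∑ x : ZMod n, ‖dirichletSum M (j * x)‖ ^ 2 = n * M := by
  have key : ∀ u < M, ∀ v < M, ((u : ZMod n) - (v : ZMod n)) * j = 0 → u = v := by
    intro u hu v hv h
    rcases lt_trichotomy u v with h' | h' | h'
    · exfalso
      apply hj (v - u) (by omega) (by omega)
      rw [Nat.cast_sub h'.le]
      linear_combination -h
    · exact h'
    · exfalso
      apply hj (u - v) (by omega) (by omega)
      rw [Nat.cast_sub h'.le]
      linear_combination h
  have hC : ((∑ x : ZMod n, ‖dirichletSum M (j * x)‖ ^ 2 : ℝ) : ℂ) = n * M := by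
    push_cast
    have h1 : ∀ x : ZMod n, ((‖dirichletSum M (j * x)‖ : ℂ)) ^ 2 =
        ∑ u ∈ Finset.range M, ∑ v ∈ Finset.range M,
          (ZMod.stdAddChar (x * (((u : ZMod n) - (v : ZMod n)) * j)) : ℂ) := by
      intro x
      rw [← Complex.mul_conj', dirichletSum_eq, map_sum, Finset.sum_mul_sum]
      refine Finset.sum_congr rfl fun u _ => Finset.sum_congr rfl fun v _ => ?_
      rw [← AddChar.map_neg_eq_conj, ← AddChar.map_add_eq_mul]
      congr 1
      ring
    simp only [h1]
    rw [Finset.sum_comm]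
    have h2 : ∀ u ∈ Finset.range M, ∑ x : ZMod n, ∑ v ∈ Finset.range M,
        (ZMod.stdAddChar (x * (((u : ZMod n) - (v : ZMod n)) * j)) : ℂ) = n := by
      intro u hu
      rw [Finset.sum_comm]
      simp only [AddChar.sum_mulShift _ (ZMod.isPrimitive_stdAddChar n), ZMod.card]
      rw [Finset.sum_eq_single u]
      · simp
      · intro v hv hvu
        rw [if_neg]
        · simp
        · intro h
          exact hvu (key u (by simpa using hu) v (by simpa using hv) h).symm
      · intro h
        exact absurd hu h
    rw [Finset.sum_congr rfl h2]
    simp [mul_comm]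
  exact_mod_cast hC

/-! ### Representing residues when the zero frequency dominates -/

/-- The total weight of the nonzero frequencies in the Fourier expansion of the number of
representations of a residue as `∑ (uᵢ + vᵢ) lᵢ + p + q` with `uᵢ, vᵢ < M` and `p, q < L`.
Changing the signs of the `lᵢ` or of `p + q` leaves it unchanged. -/
def fourierTail {n k : ℕ} [NeZero n] (M L : ℕ) (l : Fin k → ZMod n) : ℝ :=
  ∑ j ∈ Finset.univ.erase (0 : ZMod n),
    (∏ i, ‖dirichletSum M (j * l i)‖ ^ 2) * ‖dirichletSum L j‖ ^ 2

/-- The product of Dirichlet kernels is the exponential sum over a box. -/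
lemma prod_dirichletSum {n k : ℕ} [NeZero n] (M : ℕ) (x : Fin k → ZMod n) :
    ∏ i, dirichletSum M (x i) = ∑ u ∈ Fintype.piFinset (fun _ : Fin k => Finset.range M),
      (ZMod.stdAddChar (∑ i, (u i : ZMod n) * x i) : ℂ) := by
  simp only [dirichletSum_eq]
  rw [Finset.prod_univ_sum]
  refine Finset.sum_congr rfl fun u _ => ?_
  induction (Finset.univ : Finset (Fin k)) using Finset.induction_on with
  | empty => simp
  | insert a s ha ih => rw [Finset.sum_insert ha, Finset.prod_insert ha, AddChar.map_add_eq_mul, ih]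

/-- If the zero frequency, of weight `M ^ (2k) L ^ 2`, dominates all the others, then every residue
`T` is represented. The condition depends neither on `T` nor on the signs `b`, `σ`. -/
lemma exists_representation {n k : ℕ} [NeZero n] (M L : ℕ) (l : Fin k → ZMod n)
    (hS : fourierTail M L l < (M : ℝ) ^ (2 * k) * (L : ℝ) ^ 2)
    (b : Fin k → ℤ) (hb : IsSign b) (σ : ℤ) (hσ : σ = 1 ∨ σ = -1) (T : ZMod n) :
    ∃ u v : Fin k → ℕ, (∀ i, u i < M) ∧ (∀ i, v i < M) ∧ ∃ p q : ℕ, p < L ∧ q < L ∧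
      ∑ i, ((b i * ((u i : ℤ) + v i) : ℤ) : ZMod n) * l i +
        (σ : ZMod n) * ((p : ZMod n) + (q : ZMod n)) = T := by
  by_contra hcon
  push Not at hcon
  -- the `j`-th Fourier term of the representation count
  let G : ZMod n → ℂ := fun j =>
    (ZMod.stdAddChar (-(j * T)) : ℂ) * (∏ i, dirichletSum M ((b i : ZMod n) * (j * l i))) ^ 2 *
      dirichletSum L ((σ : ZMod n) * j) ^ 2
  have hsum : ∑ j, G j = 0 := by
    have hG : ∀ j, G j = ∑ u ∈ Fintype.piFinset (fun _ : Fin k => Finset.range M),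
        ∑ v ∈ Fintype.piFinset (fun _ : Fin k => Finset.range M),
        ∑ p ∈ Finset.range L, ∑ q ∈ Finset.range L,
          (ZMod.stdAddChar (j * (∑ i, ((b i * ((u i : ℤ) + v i) : ℤ) : ZMod n) * l i +
            (σ : ZMod n) * ((p : ZMod n) + (q : ZMod n)) - T)) : ℂ) := by
      intro j
      simp only [G]
      rw [prod_dirichletSum, dirichletSum_eq, sq, sq, Finset.sum_mul_sum, Finset.sum_mul_sum,
        mul_assoc, Finset.sum_mul, Finset.mul_sum]
      refine Finset.sum_congr rfl fun u _ => ?_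
      rw [Finset.sum_mul, Finset.mul_sum]
      refine Finset.sum_congr rfl fun v _ => ?_
      rw [Finset.mul_sum, Finset.mul_sum]
      refine Finset.sum_congr rfl fun p _ => ?_
      rw [Finset.mul_sum, Finset.mul_sum]
      refine Finset.sum_congr rfl fun q _ => ?_
      simp only [← AddChar.map_add_eq_mul]
      congr 1
      rw [← Finset.sum_add_distrib]
      have : ∑ i, ((u i : ZMod n) * ((b i : ZMod n) * (j * l i)) +
          (v i : ZMod n) * ((b i : ZMod n) * (j * l i))) =
          j * ∑ i, ((b i * ((u i : ℤ) + v i) : ℤ) : ZMod n) * l i := by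
        rw [Finset.mul_sum]
        refine Finset.sum_congr rfl fun i _ => ?_
        push_cast
        ring
      rw [this]
      ring
    simp only [hG]
    rw [Finset.sum_comm]
    refine Finset.sum_eq_zero fun u hu => ?_
    rw [Finset.sum_comm]
    refine Finset.sum_eq_zero fun v hv => ?_
    rw [Finset.sum_comm]
    refine Finset.sum_eq_zero fun p hp => ?_
    rw [Finset.sum_comm]
    refine Finset.sum_eq_zero fun q hq => ?_
    rw [AddChar.sum_mulShift _ (ZMod.isPrimitive_stdAddChar n), if_neg]
    · simp
    · rw [sub_eq_zero]
      simp only [Fintype.mem_piFinset, Finset.mem_range] at hu hv hp hq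
      exact hcon u v hu hv p q hp hq
  have hG0 : G 0 = (M : ℂ) ^ (2 * k) * (L : ℂ) ^ 2 := by
    simp only [G, zero_mul, mul_zero, neg_zero, AddChar.map_zero_eq_one, dirichletSum_zero,
      Finset.prod_const, Finset.card_univ, Fintype.card_fin, one_mul]
    rw [← pow_mul, mul_comm k 2]
  have hnorm : ∀ j, ‖G j‖ = (∏ i, ‖dirichletSum M (j * l i)‖ ^ 2) * ‖dirichletSum L j‖ ^ 2 := by
    intro j
    simp only [G, norm_mul, norm_pow, norm_prod, AddChar.norm_apply, one_mul]
    rw [norm_dirichletSum_sign_mul L σ hσ, ← Finset.prod_pow]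
    congr 1
    exact Finset.prod_congr rfl fun i _ => by rw [norm_dirichletSum_sign_mul M (b i) (hb i)]
  have hle : (M : ℝ) ^ (2 * k) * (L : ℝ) ^ 2 ≤ fourierTail M L l := by
    have h1 : G 0 = -∑ j ∈ Finset.univ.erase (0 : ZMod n), G j := by
      rw [← Finset.add_sum_erase _ _ (Finset.mem_univ (0 : ZMod n))] at hsum
      exact eq_neg_of_add_eq_zero_left hsum
    have h2 : ‖G 0‖ = (M : ℝ) ^ (2 * k) * (L : ℝ) ^ 2 := by
      rw [hG0]
      simp
    rw [← h2, h1, norm_neg, fourierTail]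
    refine (norm_sum_le _ _).trans (le_of_eq ?_)
    exact Finset.sum_congr rfl fun j _ => hnorm j
  exact absurd hS (not_lt.mpr hle)

/-! ### First moment and Markov's inequality -/

/-- First moment of the tail. Frequencies `j` killed by no positive integer below `M` contribute
`M ^ k` times the Parseval sum of `|D_L|²`; for each of the other nonzero frequencies `|D_L(j)| ≤ M`
by periodicity. -/
lemma sum_fourierTail_le {n : ℕ} [NeZero n] (k M L : ℕ) (hL : L ≤ n) :
    ∑ l : Fin k → ZMod n, fourierTail M L l ≤
      (n : ℝ) ^ k * ((M : ℝ) ^ k * (n * L) + n * (M : ℝ) ^ (2 * k + 2)) := by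
  unfold fourierTail
  rw [Finset.sum_comm]
  have hmom : ∀ j : ZMod n, ∑ l : Fin k → ZMod n,
      (∏ i, ‖dirichletSum M (j * l i)‖ ^ 2) * ‖dirichletSum L j‖ ^ 2 =
      (∑ x : ZMod n, ‖dirichletSum M (j * x)‖ ^ 2) ^ k * ‖dirichletSum L j‖ ^ 2 := by
    intro j
    rw [Fintype.sum_pow, Finset.sum_mul]
  simp only [hmom]
  have hterm : ∀ j ∈ Finset.univ.erase (0 : ZMod n),
      (∑ x : ZMod n, ‖dirichletSum M (j * x)‖ ^ 2) ^ k * ‖dirichletSum L j‖ ^ 2 ≤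
      (n : ℝ) ^ k * ((M : ℝ) ^ k * ‖dirichletSum L j‖ ^ 2 + (M : ℝ) ^ (2 * k + 2)) := by
    intro j hj
    have hj0 : j ≠ 0 := Finset.ne_of_mem_erase hj
    by_cases h : ∀ d : ℕ, 0 < d → d < M → (d : ZMod n) * j ≠ 0
    · rw [sum_norm_dirichletSum_sq M j h, mul_pow]
      have : 0 ≤ (n : ℝ) ^ k * (M : ℝ) ^ (2 * k + 2) := by positivity
      linarith
    · push Not at h
      obtain ⟨d, hd, hdM, hdj⟩ := h
      have h1 : ∑ x : ZMod n, ‖dirichletSum M (j * x)‖ ^ 2 ≤ n * (M : ℝ) ^ 2 := by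
        calc ∑ x : ZMod n, ‖dirichletSum M (j * x)‖ ^ 2 ≤ ∑ _x : ZMod n, (M : ℝ) ^ 2 := by
              refine Finset.sum_le_sum fun x _ => ?_
              gcongr
              exact norm_dirichletSum_le _ _
          _ = n * (M : ℝ) ^ 2 := by simp [ZMod.card]
      have h2 : ‖dirichletSum L j‖ ≤ M :=
        (norm_dirichletSum_le_of_mul_eq_zero L d hd j hj0 hdj).trans (by exact_mod_cast hdM.le)
      calc (∑ x : ZMod n, ‖dirichletSum M (j * x)‖ ^ 2) ^ k * ‖dirichletSum L j‖ ^ 2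
          ≤ (n * (M : ℝ) ^ 2) ^ k * (M : ℝ) ^ 2 := by gcongr
        _ = (n : ℝ) ^ k * (M : ℝ) ^ (2 * k + 2) := by
              rw [mul_pow, ← pow_mul, mul_assoc, ← pow_add]
        _ ≤ _ := by
              have : 0 ≤ (n : ℝ) ^ k * ((M : ℝ) ^ k * ‖dirichletSum L j‖ ^ 2) := by positivity
              linarith
  have hpars : ∑ j : ZMod n, ‖dirichletSum L j‖ ^ 2 = n * L := by
    have := sum_norm_dirichletSum_sq L (1 : ZMod n) (by
      intro d hd hdL h
      rw [mul_one, ZMod.natCast_eq_zero_iff] at h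
      exact absurd (Nat.le_of_dvd hd h) (by omega))
    simpa using this
  calc _ ≤ ∑ j ∈ Finset.univ.erase (0 : ZMod n),
        (n : ℝ) ^ k * ((M : ℝ) ^ k * ‖dirichletSum L j‖ ^ 2 + (M : ℝ) ^ (2 * k + 2)) :=
        Finset.sum_le_sum hterm
    _ ≤ ∑ j : ZMod n,
        (n : ℝ) ^ k * ((M : ℝ) ^ k * ‖dirichletSum L j‖ ^ 2 + (M : ℝ) ^ (2 * k + 2)) :=
        Finset.sum_le_sum_of_subset_of_nonneg (Finset.erase_subset _ _)
          (fun _ _ _ => by positivity)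
    _ = _ := by
        rw [← Finset.mul_sum, Finset.sum_add_distrib, ← Finset.mul_sum, hpars]
        simp [ZMod.card]

/-- Markov's inequality for the tail: if the bound on its mean is at most `δ` times the weight of the zero
frequency, any event implied by domination of the zero frequency has probability at least
`1 - δ`. -/
lemma one_sub_le_lProb {n : ℕ} [NeZero n] (k M L : ℕ) (hL : L ≤ n) (hM0 : 0 < M) (hL0 : 0 < L)
    (δ : ℝ) (hδ : (M : ℝ) ^ k * (n * L) + n * (M : ℝ) ^ (2 * k + 2) ≤
      δ * ((M : ℝ) ^ (2 * k) * (L : ℝ) ^ 2))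
    (E : (Fin k → ZMod n) → Prop)
    (hE : ∀ l, fourierTail M L l < (M : ℝ) ^ (2 * k) * (L : ℝ) ^ 2 → E l) :
    1 - δ ≤ lProb n k E := by
  set W : ℝ := (M : ℝ) ^ (2 * k) * (L : ℝ) ^ 2 with hW
  have hWpos : 0 < W := by positivity
  have hn : 0 < (n : ℝ) := by exact_mod_cast NeZero.pos n
  have hcard : (Fintype.card (Fin k → ZMod n) : ℝ) = (n : ℝ) ^ k := by
    simp [ZMod.card]
  have hbad : ((Finset.univ.filter fun l => ¬ E l).card : ℝ) * W ≤ (n : ℝ) ^ k * (δ * W) := by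
    calc ((Finset.univ.filter fun l => ¬ E l).card : ℝ) * W
        = ∑ l ∈ Finset.univ.filter (fun l => ¬ E l), W := by simp
      _ ≤ ∑ l ∈ Finset.univ.filter (fun l => ¬ E l), fourierTail M L l := by
          refine Finset.sum_le_sum fun l hl => ?_
          by_contra h
          exact (Finset.mem_filter.mp hl).2 (hE l (not_le.mp h))
      _ ≤ ∑ l : Fin k → ZMod n, fourierTail M L l :=
          Finset.sum_le_sum_of_subset_of_nonneg (Finset.filter_subset _ _)
            (fun l _ _ => by unfold fourierTail; positivity)
      _ ≤ _ := (sum_fourierTail_le k M L hL).trans (by gcongr)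
  have hbad' : ((Finset.univ.filter fun l => ¬ E l).card : ℝ) ≤ (n : ℝ) ^ k * δ := by
    refine le_of_mul_le_mul_right ?_ hWpos
    linarith
  have hadd : ((Finset.univ.filter E).card : ℝ) + ((Finset.univ.filter fun l => ¬ E l).card : ℝ) =
      (n : ℝ) ^ k := by
    rw [← hcard]
    have := Finset.card_filter_add_card_filter_not (s := Finset.univ) E
    rw [Finset.card_univ] at this
    exact_mod_cast this
  unfold lProb
  rw [hcard, le_div_iff₀ (by positivity)]
  linarith

/-! ### Sizes of the parameters -/

lemma mOf_pow_le (k : ℕ) (c : ℝ) (hc : 0 < c) (n : ℕ) (hn : 0 < n) :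
    (mOf k c n : ℝ) ^ (2 * k + 2) ≤ (c + 1) ^ (2 * k + 2) * n := by
  have hn1 : (1 : ℝ) ≤ n := by exact_mod_cast hn
  set r : ℝ := (n : ℝ) ^ ((1 : ℝ) / (2 * (k : ℝ) + 2)) with hr
  have hr1 : 1 ≤ r := Real.one_le_rpow hn1 (by positivity)
  have hrp : r ^ (2 * k + 2) = n := by
    rw [hr, ← Real.rpow_natCast, ← Real.rpow_mul (by positivity)]
    push_cast
    rw [one_div_mul_cancel (by positivity), Real.rpow_one]
  have hle : (mOf k c n : ℝ) ≤ (c + 1) * r := by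
    have := Nat.ceil_lt_add_one (a := c * r) (by positivity)
    unfold mOf
    rw [← hr]
    nlinarith
  calc (mOf k c n : ℝ) ^ (2 * k + 2) ≤ ((c + 1) * r) ^ (2 * k + 2) := by gcongr
    _ = _ := by rw [mul_pow, hrp]

lemma le_mOf (k : ℕ) (c : ℝ) (hc : 0 < c) (A : ℝ) (hA : 0 ≤ A) (n : ℕ)
    (hn : (A / c) ^ (2 * k + 2) ≤ n) : A ≤ mOf k c n := by
  have h1 : A / c ≤ (n : ℝ) ^ ((1 : ℝ) / (2 * (k : ℝ) + 2)) := by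
    calc A / c = ((A / c) ^ (2 * k + 2)) ^ ((1 : ℝ) / (2 * (k : ℝ) + 2)) := by
          rw [← Real.rpow_natCast, ← Real.rpow_mul (by positivity)]
          push_cast
          rw [mul_one_div_cancel (by positivity), Real.rpow_one]
      _ ≤ _ := by gcongr
  rw [div_le_iff₀ hc] at h1
  refine le_trans ?_ (Nat.le_ceil _)
  linarith

/-- The numerical core: with `M ≥ m / 2`, `L ≥ α s / 4` and `m ^ (2k+2) ≤ K n`, a large `α` makes the
two parts of the first moment at most `δ / 2` times the weight of the zero frequency. -/
lemma moment_bound (k : ℕ) (n m M L K α δ : ℝ) (hn : 0 < n) (hm : 0 < m) (hδ : 0 < δ)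
    (hα1 : 1 ≤ α) (hα2 : 2 ^ (k + 3) ≤ α * δ) (hα3 : 32 * K ≤ α * δ)
    (hmK : m ^ (2 * k + 2) ≤ K * n) (hM : m / 2 ≤ M) (hMm : M ≤ m)
    (hL : α * (n / m ^ k) / 4 ≤ L) :
    M ^ k * (n * L) + n * M ^ (2 * k + 2) ≤ δ * (M ^ (2 * k) * L ^ 2) := by
  have hM0 : 0 < M := by linarith [half_pos hm]
  have hα0 : 0 < α := by linarith
  have hL0 : 0 < L := lt_of_lt_of_le (by positivity) hL
  have hmk : α * n ≤ 4 * (L * m ^ k) := by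
    have : α * (n / m ^ k) / 4 = α * n / (4 * m ^ k) := by field_simp
    rw [this, div_le_iff₀ (by positivity)] at hL
    linarith
  have hMk : m ^ k ≤ 2 ^ k * M ^ k := by
    rw [← mul_pow]
    gcongr
    linarith
  have h1 : n ≤ δ / 2 * (M ^ k * L) := by
    have h : α * n ≤ α * (δ / 2 * (M ^ k * L)) := by
      calc α * n ≤ 4 * (L * m ^ k) := hmk
        _ ≤ 4 * (L * (2 ^ k * M ^ k)) := by gcongr
        _ = 2 ^ (k + 3) * (M ^ k * L / 2) := by ring
        _ ≤ α * δ * (M ^ k * L / 2) := by gcongr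
        _ = _ := by ring
    exact le_of_mul_le_mul_left h hα0
  have h2 : n * M ^ 2 ≤ δ / 2 * L ^ 2 := by
    have hsq : (α * n) ^ 2 ≤ (4 * (L * m ^ k)) ^ 2 := by gcongr
    have h : (α ^ 2 * n) * (n * M ^ 2) ≤ (α ^ 2 * n) * (δ / 2 * L ^ 2) := by
      calc (α ^ 2 * n) * (n * M ^ 2) = (α * n) ^ 2 * M ^ 2 := by ring
        _ ≤ (4 * (L * m ^ k)) ^ 2 * m ^ 2 := by gcongr
        _ = 16 * L ^ 2 * m ^ (2 * k + 2) := by ring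
        _ ≤ 16 * L ^ 2 * (K * n) := by gcongr
        _ = (32 * K) * (L ^ 2 * n / 2) := by ring
        _ ≤ (α * δ) * (L ^ 2 * n / 2) := by gcongr
        _ ≤ (α * (α * δ)) * (L ^ 2 * n / 2) := by
            gcongr
            exact le_mul_of_one_le_left (by positivity) hα1
        _ = _ := by ring
    exact le_of_mul_le_mul_left h (by positivity)
  calc M ^ k * (n * L) + n * M ^ (2 * k + 2)
      = (M ^ k * L) * n + M ^ (2 * k) * (n * M ^ 2) := by ring
    _ ≤ (M ^ k * L) * (δ / 2 * (M ^ k * L)) + M ^ (2 * k) * (δ / 2 * L ^ 2) := by gcongr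
    _ = _ := by ring

/-- for every `0 < δ₄ < 1` there are `α₄ > 0` and `N` such that for all
`n ≥ N`, with probability at least `1 - δ₄` over `l`: for every sign pattern `b` and every
`y ∈ Y_m^b` there are `y', y'' ∈ Y_m^b` and integers `0 < t', t'' < α₄ s` with
`f_l(y) - f_l(y') = t' mod n` and `f_l(y'') - f_l(y) = t'' mod n`: every mapped point has
mapped neighbors on both sides at distance of order `s`. -/
theorem mapped_points_spread_evenly (k : ℕ) (hk : 1 ≤ k) (c : ℝ) (hc : 0 < c)
    (δ₄ : ℝ) (h0 : 0 < δ₄) (h1 : δ₄ < 1) :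
    ∃ α₄ : ℝ, 0 < α₄ ∧ ∃ N : ℕ, ∀ (n : ℕ) [NeZero n], N ≤ n →
      1 - δ₄ ≤ lProb n k (fun l =>
        ∀ b : Fin k → ℤ, IsSign b →
          ∀ y : Fin k → ℤ, inYmb b (mOf k c n) y →
            ∃ y' y'' : Fin k → ℤ, inYmb b (mOf k c n) y' ∧ inYmb b (mOf k c n) y'' ∧
              ∃ t' t'' : ℤ,
                0 < t' ∧ (t' : ℝ) < α₄ * sOf k c n ∧
                0 < t'' ∧ (t'' : ℝ) < α₄ * sOf k c n ∧
                fl l y - fl l y' = (t' : ZMod n) ∧ fl l y'' - fl l y = (t'' : ZMod n)) := by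
  set K : ℝ := (c + 1) ^ (2 * k + 2) with hK
  have hKpos : 0 < K := by positivity
  set α : ℝ := 2 ^ (k + 3) / δ₄ + 32 * K / δ₄ + 4 with hα
  have hp1 : 0 < (2 : ℝ) ^ (k + 3) / δ₄ := by positivity
  have hp2 : 0 < 32 * K / δ₄ := by positivity
  have hα4 : 4 ≤ α := by linarith
  have hα2 : 2 ^ (k + 3) ≤ α * δ₄ := by
    rw [← div_le_iff₀ h0]
    linarith
  have hα3 : 32 * K ≤ α * δ₄ := by
    rw [← div_le_iff₀ h0]
    linarith
  refine ⟨α, by linarith, ⌈(α / c) ^ (2 * k + 2)⌉₊, ?_⟩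
  intro n _ hNn
  have hn : 0 < n := NeZero.pos n
  have hnR : (0 : ℝ) < n := by exact_mod_cast hn
  have hαm : α ≤ mOf k c n := le_mOf k c hc α (by linarith) n (Nat.ceil_le.mp hNn)
  have hmK : (mOf k c n : ℝ) ^ (2 * k + 2) ≤ K * n := mOf_pow_le k c hc n hn
  have hs : sOf k c n = (n : ℝ) / (mOf k c n : ℝ) ^ k := rfl
  set m : ℕ := mOf k c n with hm
  set s : ℝ := sOf k c n with hs'
  have hm1 : (1 : ℝ) ≤ m := by linarith
  have hmkpos : (0 : ℝ) < (m : ℝ) ^ k := by positivity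
  have hspos : 0 < s := by rw [hs]; positivity
  have hαs : 4 ≤ α * s := by
    have h : (m : ℝ) ^ k ≤ K * n := (pow_le_pow_right₀ hm1 (by omega)).trans hmK
    have h32 : 32 * K ≤ α := hα3.trans (mul_le_of_le_one_right (by linarith) h1.le)
    rw [hs, ← mul_div_assoc, le_div_iff₀ hmkpos]
    nlinarith
  have hαsn : α * s ≤ n := by
    have h : α ≤ (m : ℝ) ^ k := hαm.trans (le_self_pow₀ hm1 (by omega))
    rw [hs, ← mul_div_assoc, div_le_iff₀ hmkpos]
    nlinarith
  -- `u + v < m` for `u, v < M`, and `p + q + 1 < α s` for `p, q < L`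
  set M : ℕ := (m + 1) / 2 with hMdef
  set L : ℕ := ⌊α * s / 2⌋₊ with hLdef
  have hLle : (L : ℝ) ≤ α * s / 2 := Nat.floor_le (by linarith)
  have hLge : α * s / 4 ≤ L := by
    have := Nat.lt_floor_add_one (α * s / 2)
    linarith
  have hL0 : 0 < L := by
    have : (0 : ℝ) < L := by linarith
    exact_mod_cast this
  have hLn : L ≤ n := by
    have : (L : ℝ) ≤ n := by linarith
    exact_mod_cast this
  have hmN : 1 ≤ m := by exact_mod_cast hm1
  have hMge : (m : ℝ) / 2 ≤ M := by
    have : m ≤ 2 * M := by omega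
    have : (m : ℝ) ≤ 2 * M := by exact_mod_cast this
    linarith
  have hMm : (M : ℝ) ≤ m := by
    have : M ≤ m := by omega
    exact_mod_cast this
  refine one_sub_le_lProb k M L hLn (by omega) hL0 δ₄
    (moment_bound k n m M L K α δ₄ hnR (by linarith) h0 (by linarith) hα2 hα3 hmK hMge hMm
      (by rw [← hs]; exact hLge)) _ ?_
  intro l hl b hb y hy
  have hbox : ∀ u v : Fin k → ℕ, (∀ i, u i < M) → (∀ i, v i < M) →
      inYmb b m (fun i => b i * ((u i : ℤ) + v i)) := by
    intro u v hu hv i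
    have hbb : b i * (b i * ((u i : ℤ) + v i)) = (u i : ℤ) + v i := by
      rcases hb i with h | h <;> rw [h] <;> ring
    have := hu i
    have := hv i
    simp only [hbb]
    omega
  have hshort : ∀ p q : ℕ, p < L → q < L → (((p + q + 1 : ℤ)) : ℝ) < α * s := by
    intro p q hp hq
    have : p + q + 2 ≤ 2 * L := by omega
    have : ((p : ℝ) + q + 2) ≤ 2 * L := by exact_mod_cast this
    push_cast
    linarith
  obtain ⟨u, v, hu, hv, p, q, hp, hq, h⟩ :=
    exists_representation M L l hl b hb 1 (Or.inl rfl) (fl l y - 1)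
  obtain ⟨u', v', hu', hv', p', q', hp', hq', h'⟩ :=
    exists_representation M L l hl b hb (-1) (Or.inr rfl) (fl l y + 1)
  refine ⟨_, _, hbox u v hu hv, hbox u' v' hu' hv', p + q + 1, p' + q' + 1, by omega,
    hshort p q hp hq, by omega, hshort p' q' hp' hq', ?_, ?_⟩
  · simp only [fl] at h ⊢
    push_cast at h ⊢
    linear_combination -h
  · simp only [fl] at h' ⊢
    push_cast at h' ⊢
    linear_combination h'
end
end

section
/- Fix ρ ∈ (0,1] and λ₃ > 0, and set m = ⌈λ₃ √ρ · n^{1/(2k+2)}⌉ and L = ⌊ρ · n^{(k+2)/(k+1)}⌋. Let Ξ_m = {(L + f_l(y)) mod n : y ∈ ℤ^k, 0 ≤ y_i < m for all i} ⊆ ZMod n. For every δ₄ with 0 < δ₄ < 1 there exist α₄ > 0 and N ∈ ℕ such that for every n ≥ N, with probability at least 1 − δ₄ over the random l: for every point x ∈ ZMod n there exist x', x'' ∈ Ξ_m and integers t', t'' with 0 < t' < α₄ ρ^{−k/2} n^{(k+2)/(2k+2)} and 0 < t'' < α₄ ρ^{−k/2} n^{(k+2)/(2k+2)} such that x = x'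 + t' mod n and x'' = x + t'' mod n. -/
/-!
Let `S` be the set of pairs `(y, t)` with `0 ≤ yᵢ < M` and `0 ≤ t < T`, where `M` is about `m / 2` and
`T` is a large constant times `n / M ^ k`. It suffices that for most `l` the values `f_l(y) + t`,
`(y, t) ∈ S`, satisfy: every `w` in `ZMod n` is a sum of two of them. Indeed `f_l` is additive, so then
every `w` is `f_l(y) + t` with `0 ≤ yᵢ < m` and `0 ≤ t < 2T - 1`, for all `w` simultaneously; applying
this to suitable translates of `x` puts endpoints on both sides of `x`.

Let `r z` be the number of elements of `S` mapped to `z`, with mean `|S| / n`. If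
`n ∑ r² < 2 |S|²`, i.e. if `r` differs from its mean by little in `ℓ²`, then the convolution `r * r`
vanishes nowhere (`exists_add_eq_of_collisions`). The sum `∑ r²` counts collisions
`f_l(y) + t = f_l(y') + t'`, and its average over `l` is at most
`|S| + (|S|² / n) (1 + M / T)` (`sum_collisions_le`): pairs with `y = y'` collide only if `t = t'`, and
for `y ≠ y'` the value `f_l(y - y')` is nearly equidistributed. By Markov's inequality the proportion
of bad `l` is at most `n / (M ^ k T) + M / T` (`card_bad_le`), which is at most `δ₄` for suitable
parameters (`exists_params`).
-/

open scoped BigOperators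

noncomputable section

attribute [local instance 10] Classical.propDecidable

/-! ### Counting in `ZMod n` -/

/-- If the fibre-size function `r` of `F` on `S` is close enough to constant in `ℓ²`, then `F(S)+F(S)`
is everything. A missing sum `w` makes `r z` and `r (w - z)` disjointly supported, so that
`∑ (r z + r (w - z))²` is only `2 ∑ r²`, and Cauchy–Schwarz gives `(2|S|)² ≤ 2 n ∑ r²`. -/
theorem exists_add_eq_of_collisions {n : ℕ} [NeZero n] {σ : Type*} (S : Finset σ)
    (F : σ → ZMod n)
    (h : n * ∑ z : ZMod n, (S.filter (fun s => F s = z)).card ^ 2 < 2 * S.card ^ 2)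
    (w : ZMod n) : ∃ s ∈ S, ∃ s' ∈ S, F s + F s' = w := by
  by_contra! hne
  set r : ZMod n → ℕ := fun z => (S.filter (fun s => F s = z)).card with hr
  have hsum : ∑ z, r z = S.card :=
    (Finset.card_eq_sum_card_fiberwise (fun s _ => Finset.mem_univ (F s))).symm
  have hrefl : ∀ g : ZMod n → ℕ, ∑ z, g (w - z) = ∑ z, g z := fun g =>
    (Equiv.subLeft w).sum_comp g
  have hzero : ∀ z, r z * r (w - z) = 0 := by
    intro z
    by_contra hz
    obtain ⟨h1, h2⟩ := mul_ne_zero_iff.1 hz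
    obtain ⟨s, hs⟩ := Finset.card_pos.1 (Nat.pos_of_ne_zero h1)
    obtain ⟨s', hs'⟩ := Finset.card_pos.1 (Nat.pos_of_ne_zero h2)
    rw [Finset.mem_filter] at hs hs'
    exact hne s hs.1 s' hs'.1 (by rw [hs.2, hs'.2]; ring)
  have hcs := sq_sum_le_card_mul_sum_sq (s := Finset.univ) (f := fun z => r z + r (w - z))
  have hsq : ∑ z, (r z + r (w - z)) ^ 2 = 2 * ∑ z, r z ^ 2 := by
    have : ∀ z, (r z + r (w - z)) ^ 2 = r z ^ 2 + r (w - z) ^ 2 := by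
      intro z; linear_combination 2 * hzero z
    simp_rw [this]
    rw [Finset.sum_add_distrib, hrefl (fun z => r z ^ 2)]; ring
  rw [hsq, Finset.sum_add_distrib, hrefl r, hsum, Finset.card_univ, ZMod.card] at hcs
  simp only [Nat.cast_id] at hcs
  change n * ∑ z, r z ^ 2 < _ at h
  nlinarith

/-- The sum of squared fibre sizes is the number of collisions of `F`. -/
theorem sum_sq_fiber {σ α : Type*} [Fintype α] [DecidableEq α] (S : Finset σ) (F : σ → α) :
    ∑ z, (S.filter (fun s => F s = z)).card ^ 2
      = ∑ s ∈ S, ∑ s' ∈ S, if F s = F s' then 1 else 0 := by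
  have : ∀ s ∈ S, (∑ s' ∈ S, if F s = F s' then 1 else 0)
      = (S.filter (fun s' => F s' = F s)).card := by
    intro s _
    rw [Finset.card_filter]
    simp only [eq_comm]
  rw [Finset.sum_congr rfl this, ← Finset.sum_fiberwise S F]
  refine Finset.sum_congr rfl fun z _ => ?_
  rw [Finset.sum_congr rfl (g := fun _ => (S.filter (fun s => F s = z)).card)]
  · simp [sq]
  · intro s hs
    rw [(Finset.mem_filter.1 hs).2]

/-- The map `a ↦ v a` on `ZMod n` hits an interval of length `T` at most `T + |v|` times. With
`d = gcd(n, v)`, each fibre has at most `d` elements, and the values lie in one class modulo `d`,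
of which the interval contains at most `T / d + 1` elements. -/
theorem card_linear_interval_le {n : ℕ} [NeZero n] (v : ℤ) (hv : v ≠ 0) (c : ZMod n) (T : ℕ) :
    ∑ a : ZMod n, ∑ t ∈ Finset.range T, (if (v : ZMod n) * a = c + (t : ZMod n) then 1 else 0)
      ≤ T + v.natAbs := by
  set d := Nat.gcd n v.natAbs with hd
  have hd0 : 0 < d := Nat.gcd_pos_of_pos_left _ (Nat.pos_of_ne_zero (NeZero.ne n))
  have hdn : (d : ℤ) ∣ n := by exact_mod_cast Nat.gcd_dvd_left n v.natAbs
  have hdv : (d : ℤ) ∣ v := Int.natCast_dvd.2 (Nat.gcd_dvd_right n v.natAbs)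
  have hfib : ∀ z : ZMod n, (Finset.univ.filter fun a : ZMod n => (v : ZMod n) * a = z).card ≤ d := by
    intro z
    rcases Finset.eq_empty_or_nonempty
      (Finset.univ.filter fun a : ZMod n => (v : ZMod n) * a = z) with he | ⟨a₀, ha₀⟩
    · rw [he]; simp
    · have ha₀ := (Finset.mem_filter.1 ha₀).2
      refine le_trans ?_ (IsAddCyclic.card_nsmul_eq_zero_le (α := ZMod n) hd0)
      refine Finset.card_le_card_of_injOn (fun a => a - a₀) ?_ ?_
      · intro a ha
        have ha := (Finset.mem_filter.1 ha).2
        simp only [Finset.coe_filter, Finset.mem_univ, true_and, Set.mem_ofPred_eq]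
        have h1 : n • (a - a₀) = 0 := by simp
        have h2 : v.natAbs • (a - a₀) = 0 := by
          rw [natAbs_nsmul_eq_zero, zsmul_eq_mul, mul_sub, ha, ha₀, sub_self]
        exact gcd_nsmul_eq_zero.2 ⟨h1, h2⟩
      · intro a _ b _ hab
        exact sub_left_injective hab
  set R := (Finset.range T).filter fun t : ℕ => ∃ a : ZMod n, (v : ZMod n) * a = c + (t : ZMod n) with hR
  -- The admissible `t` lie in a single class modulo `d`, so `t ↦ t / d` is injective on them.
  have hRcard : R.card ≤ T / d + 1 := by
    rw [← Finset.card_range (T / d + 1)]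
    refine Finset.card_le_card_of_injOn (fun t => t / d) ?_ ?_
    · intro t ht
      have ht := Finset.mem_range.1 (Finset.mem_filter.1 ht).1
      have := Nat.div_le_div_right (c := d) ht.le
      simp only [Finset.coe_range, Set.mem_Iio]
      omega
    · intro t ht t' ht' htt
      obtain ⟨a, ha⟩ := (Finset.mem_filter.1 ht).2
      obtain ⟨b, hb⟩ := (Finset.mem_filter.1 ht').2
      have hz : ((v * ((a.val : ℤ) - b.val) - ((t : ℤ) - t') : ℤ) : ZMod n) = 0 := by
        push_cast
        rw [ZMod.natCast_zmod_val, ZMod.natCast_zmod_val, mul_sub, ha, hb]; ring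
      have h1 := hdn.trans ((ZMod.intCast_zmod_eq_zero_iff_dvd _ n).1 hz)
      have h2 : (d : ℤ) ∣ (t : ℤ) - t' := by
        have := dvd_sub (hdv.mul_right ((a.val : ℤ) - b.val)) h1
        simpa using this
      have h3 : t' ≡ t [MOD d] := (Nat.modEq_iff_dvd).2 h2
      have h4 : t' % d = t % d := h3
      simp only at htt
      rw [← Nat.div_add_mod t d, ← Nat.div_add_mod t' d, htt, h4]
  rw [Finset.sum_comm]
  have hle : ∑ t ∈ Finset.range T, ∑ a : ZMod n,
      (if (v : ZMod n) * a = c + (t : ZMod n) then 1 else 0) ≤ ∑ t ∈ R, d := by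
    rw [hR, Finset.sum_filter]
    refine Finset.sum_le_sum fun t _ => ?_
    split_ifs with hex
    · rw [← Finset.card_filter]; exact hfib _
    · push Not at hex
      simp [hex]
  refine hle.trans ?_
  rw [Finset.sum_const, smul_eq_mul]
  have hdle : d ≤ v.natAbs := Nat.le_of_dvd (Int.natAbs_pos.2 hv) (Nat.gcd_dvd_right _ _)
  calc R.card * d ≤ (T / d + 1) * d := Nat.mul_le_mul_right _ hRcard
    _ = T / d * d + d := by ring
    _ ≤ T + v.natAbs := add_le_add (Nat.div_mul_le_self T d) hdle

/-! ### Collisions averaged over `l` -/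

/-- The point `f_l(y) + t` of `ZMod n` attached to `p = (y, t)`. The coordinates of `y` and `t` are
natural numbers, since only nonnegative ones occur. -/
def trackPoint {n k : ℕ} (l : Fin k → ZMod n) (p : (Fin k → ℕ) × ℕ) : ZMod n :=
  ∑ i, (p.1 i : ZMod n) * l i + (p.2 : ZMod n)

/-- The pairs `(y, t)` with all `yᵢ < M` and `t < T`. -/
def trackBox (k M T : ℕ) : Finset ((Fin k → ℕ) × ℕ) :=
  Fintype.piFinset (fun _ : Fin k => Finset.range M) ×ˢ Finset.range T

theorem card_trackBox (k M T : ℕ) : (trackBox k M T).card = M ^ k * T := by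
  simp [trackBox]

theorem trackPoint_add_single {n k : ℕ} (l : Fin k → ZMod n) (i : Fin k) (a : ZMod n)
    (y : Fin k → ℕ) (t : ℕ) :
    trackPoint (l + Pi.single i a) (y, t) = trackPoint l (y, t) + (y i : ZMod n) * a := by
  simp only [trackPoint, Pi.add_apply, mul_add, Finset.sum_add_distrib]
  rw [Finset.sum_eq_single i (f := fun j => (y j : ZMod n) * (Pi.single i a : Fin k → ZMod n) j)]
  · simp; ring
  · intro j _ hj; simp [hj]
  · simp

/-- For `y ≠ y'` and a fixed `t`, the equation `f_l(y) + t = f_l(y') + t'` has on average over `l` at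
most `(T + M) / n` solutions `t'`. Averaging over translations of `l` along a coordinate in which
`y` and `y'` differ reduces this to `card_linear_interval_le`. -/
theorem collisions_of_ne {n k : ℕ} [NeZero n] {M T : ℕ} {y y' : Fin k → ℕ}
    (hy : ∀ i, y i < M) (hy' : ∀ i, y' i < M) (hne : y ≠ y') (t : ℕ) :
    n * ∑ l : Fin k → ZMod n, ∑ t' ∈ Finset.range T,
        (if trackPoint l (y, t) = trackPoint l (y', t') then 1 else 0) ≤ n ^ k * (T + M) := by
  obtain ⟨i, hi⟩ := Function.ne_iff.1 hne
  set g : (Fin k → ZMod n) → ℕ := fun l => ∑ t' ∈ Finset.range T,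
        (if trackPoint l (y, t) = trackPoint l (y', t') then 1 else 0) with hg
  have hshift : n * ∑ l, g l = ∑ l, ∑ a : ZMod n, g (l + (Pi.single i a : Fin k → ZMod n)) := by
    clear_value g
    have hinv : ∀ a : ZMod n, ∑ l, g (l + (Pi.single i a : Fin k → ZMod n)) = ∑ l, g l := fun a =>
      Equiv.sum_comp (Equiv.addRight (Pi.single i a : Fin k → ZMod n)) g
    rw [Finset.sum_comm,
      Finset.sum_congr rfl fun a _ => hinv a, Finset.sum_const, Finset.card_univ, ZMod.card,
      smul_eq_mul]
  have hbound : ∀ l, ∑ a : ZMod n, g (l + (Pi.single i a : Fin k → ZMod n)) ≤ T + M := by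
    intro l
    have h1 := card_linear_interval_le (n := n) ((y i : ℤ) - y' i) (by omega)
      (trackPoint l (y', 0) - trackPoint l (y, t)) T
    have h2 : ((y i : ℤ) - y' i).natAbs ≤ M := by have := hy i; have := hy' i; omega
    refine le_trans (le_of_eq ?_) (h1.trans (Nat.add_le_add_left h2 T))
    refine Finset.sum_congr rfl fun a _ => Finset.sum_congr rfl fun t' _ => ?_
    rw [trackPoint_add_single, trackPoint_add_single]
    refine if_congr ?_ rfl rfl
    simp only [trackPoint, Int.cast_sub, Int.cast_natCast, Nat.cast_zero, add_zero]
    constructor <;> intro h <;> linear_combination h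
  rw [hshift]
  refine (Finset.sum_le_sum fun l _ => hbound l).trans ?_
  simp [ZMod.card]

theorem collisions_of_eq {n k : ℕ} [NeZero n] {T : ℕ} (hT : T ≤ n) (y : Fin k → ℕ)
    {t : ℕ} (ht : t < T) :
    n * ∑ l : Fin k → ZMod n, ∑ t' ∈ Finset.range T,
        (if trackPoint l (y, t) = trackPoint l (y, t') then 1 else 0) ≤ n * n ^ k := by
  refine Nat.mul_le_mul_left n ?_
  have : ∀ l : Fin k → ZMod n, ∑ t' ∈ Finset.range T,
        (if trackPoint l (y, t) = trackPoint l (y, t') then 1 else 0) ≤ 1 := by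
    intro l
    rw [← Finset.card_filter, Finset.card_le_one]
    have key : ∀ a ∈ (Finset.range T).filter
        (fun t' => trackPoint l (y, t) = trackPoint l (y, t')), t = a := by
      intro a ha
      obtain ⟨ha, hE⟩ := Finset.mem_filter.1 ha
      have ha := Finset.mem_range.1 ha
      simp only [trackPoint, add_right_inj] at hE
      have := (ZMod.natCast_eq_natCast_iff' _ _ _).1 hE
      rwa [Nat.mod_eq_of_lt (by omega), Nat.mod_eq_of_lt (by omega)] at this
    intro a ha b hb
    rw [← key a ha, ← key b hb]
  refine (Finset.sum_le_sum fun l _ => this l).trans ?_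
  simp [ZMod.card]

theorem sum_collisions_le {n k : ℕ} [NeZero n] {M T : ℕ} (hT : T ≤ n) :
    ∑ l : Fin k → ZMod n, n * ∑ z : ZMod n,
        ((trackBox k M T).filter (fun s => trackPoint l s = z)).card ^ 2
      ≤ n ^ k * (M ^ k * T * (M ^ k * (T + M) + n)) := by
  set B := Fintype.piFinset (fun _ : Fin k => Finset.range M) with hB
  have hmem : ∀ y ∈ B, ∀ i, y i < M := fun y hy i =>
    Finset.mem_range.1 (Fintype.mem_piFinset.1 hy i)
  have hBcard : B.card = M ^ k := by simp [hB]
  calc _ = ∑ y ∈ B, ∑ t ∈ Finset.range T, ∑ y' ∈ B, n * ∑ l : Fin k → ZMod n,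
            ∑ t' ∈ Finset.range T,
            (if trackPoint l (y, t) = trackPoint l (y', t') then 1 else 0) := by
        simp_rw [sum_sq_fiber, trackBox, ← hB, Finset.sum_product, Finset.mul_sum]
        rw [Finset.sum_comm]
        refine Finset.sum_congr rfl fun y _ => ?_
        rw [Finset.sum_comm]
        refine Finset.sum_congr rfl fun t _ => ?_
        rw [Finset.sum_comm]
    _ ≤ ∑ y ∈ B, ∑ t ∈ Finset.range T, ∑ y' ∈ B,
          (n ^ k * (T + M) + if y = y' then n * n ^ k else 0) := by
        refine Finset.sum_le_sum fun y hy => Finset.sum_le_sum fun t ht =>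
          Finset.sum_le_sum fun y' hy' => ?_
        split_ifs with h
        · subst h
          exact (collisions_of_eq hT y (Finset.mem_range.1 ht)).trans (Nat.le_add_left _ _)
        · exact collisions_of_ne (hmem y hy) (hmem y' hy') h t
    _ = ∑ y ∈ B, ∑ t ∈ Finset.range T, (M ^ k * (n ^ k * (T + M)) + n * n ^ k) := by
        refine Finset.sum_congr rfl fun y hy => Finset.sum_congr rfl fun t ht => ?_
        rw [Finset.sum_add_distrib, Finset.sum_ite_eq, if_pos hy, Finset.sum_const, hBcard,
          smul_eq_mul]
    _ = _ := by
        simp only [Finset.sum_const, hBcard, Finset.card_range, smul_eq_mul]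
        ring

/-- Markov's inequality for the excess `n Q(l) - |S|²` of the number of collisions `Q(l)` over its
least possible value: it is nonnegative, it is at least `|S|²` for every `l` missing some `w`, and
its average is controlled by `sum_collisions_le`. -/
theorem card_bad_le {n k : ℕ} [NeZero n] {M T : ℕ} (hT : T ≤ n) :
    (Finset.univ.filter fun l : Fin k → ZMod n =>
      ¬ ∀ w, ∃ s ∈ trackBox k M T, ∃ s' ∈ trackBox k M T,
        trackPoint l s + trackPoint l s' = w).card * (M ^ k * T) ^ 2
      ≤ n ^ k * (M ^ k * T * (M ^ k * M + n)) := by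
  set Q : (Fin k → ZMod n) → ℕ := fun l => ∑ z : ZMod n,
        ((trackBox k M T).filter (fun s => trackPoint l s = z)).card ^ 2 with hQ
  set P : (Fin k → ZMod n) → Prop := fun l => ¬ ∀ w, ∃ s ∈ trackBox k M T,
    ∃ s' ∈ trackBox k M T, trackPoint l s + trackPoint l s' = w with hP
  have hlow : ∀ l, (M ^ k * T) ^ 2 + (if P l then (M ^ k * T) ^ 2 else 0) ≤ n * Q l := by
    intro l
    split_ifs with h
    · by_contra hlt
      refine h fun w => exists_add_eq_of_collisions _ _ ?_ w
      rw [card_trackBox]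
      change n * Q l < _
      omega
    · have hcs := sq_sum_le_card_mul_sum_sq (s := (Finset.univ : Finset (ZMod n)))
        (f := fun z => ((trackBox k M T).filter (fun s => trackPoint l s = z)).card)
      rw [← Finset.card_eq_sum_card_fiberwise (fun s _ => Finset.mem_univ (trackPoint l s)),
        card_trackBox, Finset.card_univ, ZMod.card] at hcs
      simpa using hcs
  have hsum := (Finset.sum_le_sum fun l (_ : l ∈ Finset.univ) => hlow l).trans
    (sum_collisions_le (k := k) (M := M) hT)
  rw [Finset.sum_add_distrib, ← Finset.sum_filter, Finset.sum_const, Finset.sum_const,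
    Finset.card_univ, Fintype.card_fun, ZMod.card, Fintype.card_fin, smul_eq_mul, smul_eq_mul]
    at hsum
  nlinarith

/-! ### Choice of parameters -/

/-- Parameters for which the proportion of bad `l` in `card_bad_le` is at most `δ`: `M = ⌈m / 2⌉`, so
that sums of two coordinates below `M` stay below `m = ⌈c n^{1/(2k+2)}⌉`, and
`T` of order `n^{(k+2)/(2k+2)}`. -/
theorem exists_params (k : ℕ) (hk : 1 ≤ k) (c δ : ℝ) (hc : 0 < c) (hδ : 0 < δ) :
    ∃ A : ℝ, 0 < A ∧ ∃ N : ℕ, ∀ n : ℕ, N ≤ n →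
      ∃ M T : ℕ, 0 < M ∧ 0 < T ∧ T ≤ n ∧
        2 * M ≤ ⌈c * (n : ℝ) ^ ((1 : ℝ) / (2 * (k : ℝ) + 2))⌉₊ + 1 ∧
        (2 * T - 1 : ℝ) < A * (n : ℝ) ^ (((k : ℝ) + 2) / (2 * (k : ℝ) + 2)) ∧
        (M : ℝ) ^ k * M + n ≤ δ * (M ^ k * T) := by
  -- This value of `A` makes `n ≤ (δ / 2) * M ^ k * T`.
  set A : ℝ := 2 / (δ * (c / 2) ^ k) with hA
  have hA0 : 0 < A := by positivity
  set u : ℝ := (1 : ℝ) / (2 * (k : ℝ) + 2) with hu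
  set e : ℝ := ((k : ℝ) + 2) / (2 * (k : ℝ) + 2) with he
  have hk' : (1 : ℝ) ≤ k := by exact_mod_cast hk
  have hu0 : 0 < u := by positivity
  have he0 : 0 < e := by positivity
  have heu : e = u + 1 / 2 := by rw [he, hu]; field_simp; ring
  have hkue : u * k + e = 1 := by rw [he, hu]; field_simp; ring
  -- The first limit gives `T ≤ n` (here `1 - e = u * k > 0`), the second makes `M / T` small.
  have hlim1 : ∀ᶠ n : ℕ in Filter.atTop, A + 1 ≤ (n : ℝ) ^ (u * k) :=
    ((tendsto_rpow_atTop (by positivity)).comp tendsto_natCast_atTop_atTop).eventually_ge_atTop _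
  have hlim2 : ∀ᶠ n : ℕ in Filter.atTop, 2 * (c + 1) / (δ * A) ≤ (n : ℝ) ^ ((1 : ℝ) / 2) :=
    ((tendsto_rpow_atTop (by positivity)).comp tendsto_natCast_atTop_atTop).eventually_ge_atTop _
  obtain ⟨N, hN⟩ := Filter.eventually_atTop.1
    (hlim1.and (hlim2.and (Filter.eventually_ge_atTop 1)))
  refine ⟨2 * A + 1, by positivity, N, fun n hn => ?_⟩
  obtain ⟨h1, h2, hn1⟩ := hN n hn
  have hnR : (1 : ℝ) ≤ n := by exact_mod_cast hn1
  have hn0 : (0 : ℝ) < n := by linarith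
  have hU : 1 ≤ (n : ℝ) ^ u := Real.one_le_rpow hnR hu0.le
  have hE : 1 ≤ (n : ℝ) ^ e := Real.one_le_rpow hnR he0.le
  set m := ⌈c * (n : ℝ) ^ u⌉₊ with hm
  have hm0 : 0 < m := Nat.ceil_pos.2 (by positivity)
  have hmlow : c * (n : ℝ) ^ u ≤ m := Nat.le_ceil _
  have hmup : (m : ℝ) < c * (n : ℝ) ^ u + 1 := Nat.ceil_lt_add_one (by positivity)
  set T := ⌈A * (n : ℝ) ^ e⌉₊ with hT
  have hTlow : A * (n : ℝ) ^ e ≤ T := Nat.le_ceil _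
  have hTup : (T : ℝ) < A * (n : ℝ) ^ e + 1 := Nat.ceil_lt_add_one (by positivity)
  have hmM : (m : ℝ) ≤ 2 * ((m + 1) / 2 : ℕ) := by
    have : m ≤ 2 * ((m + 1) / 2) := by omega
    exact_mod_cast this
  have hMm : (((m + 1) / 2 : ℕ) : ℝ) ≤ m := by
    have : (m + 1) / 2 ≤ m := by omega
    exact_mod_cast this
  have hM0 : 0 < (m + 1) / 2 := by omega
  have hMle : 2 * ((m + 1) / 2) ≤ m + 1 := by omega
  generalize (m + 1) / 2 = M at *
  have hMR : (0 : ℝ) < M := by exact_mod_cast hM0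
  have hsplit : (n : ℝ) ^ (u * k) * (n : ℝ) ^ e = n := by
    rw [← Real.rpow_add hn0, hkue, Real.rpow_one]
  refine ⟨M, T, hM0, Nat.ceil_pos.2 (by positivity), ?_, hMle, by nlinarith, ?_⟩
  · have : (T : ℝ) ≤ n := by nlinarith
    exact_mod_cast this
  · have hfirst : (n : ℝ) ≤ δ / 2 * (M ^ k * T) := by
      have hMk : (c / 2) ^ k * (n : ℝ) ^ (u * k) ≤ (M : ℝ) ^ k := by
        rw [Real.rpow_mul hn0.le, Real.rpow_natCast, ← mul_pow]
        exact pow_le_pow_left₀ (by positivity) (by linarith) k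
      calc (n : ℝ) = δ / 2 * (((c / 2) ^ k * (n : ℝ) ^ (u * k)) * (A * (n : ℝ) ^ e)) := by
            rw [hA]
            have : δ / 2 * (((c / 2) ^ k * (n : ℝ) ^ (u * k)) * (2 / (δ * (c / 2) ^ k) * (n : ℝ) ^ e))
              = (n : ℝ) ^ (u * k) * (n : ℝ) ^ e := by
              have : (c / 2) ^ k ≠ 0 := by positivity
              generalize (c / 2) ^ k = q at *
              field_simp
            rw [this, hsplit]
        _ ≤ _ := by gcongr
    have hsecond : (M : ℝ) ≤ δ / 2 * T := by
      have h3 : 2 * (c + 1) ≤ δ * A * (n : ℝ) ^ ((1 : ℝ) / 2) := by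
        rw [div_le_iff₀ (by positivity)] at h2; linarith
      have h4 : (n : ℝ) ^ e = (n : ℝ) ^ u * (n : ℝ) ^ ((1 : ℝ) / 2) := by
        rw [heu, Real.rpow_add hn0]
      calc (M : ℝ) ≤ (c + 1) * (n : ℝ) ^ u := by nlinarith
        _ ≤ δ / 2 * (A * (n : ℝ) ^ e) := by rw [h4]; nlinarith
        _ ≤ _ := by gcongr
    have : (M : ℝ) ^ k * M ≤ M ^ k * (δ / 2 * T) := by gcongr
    linarith

/-- fix `ρ ∈ (0,1]` and `λ₃ > 0`, set `m = ⌈λ₃ √ρ n^{1/(2k+2)}⌉` and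
`L = ⌊ρ n^{(k+2)/(k+1)}⌋`, and let `Ξ_m = {L + f_l(y) : 0 ≤ yᵢ < m}` be the set of
possible loop-erased track endpoints. For every `0 < δ₄ < 1` there are `α₄ > 0` and `N`
such that for all `n ≥ N`, with probability at least `1 - δ₄` over `l`: every `x ∈ ZMod n`
has points of `Ξ_m` on both sides within distance `α₄ ρ^{-k/2} n^{(k+2)/(2k+2)}`. -/
theorem track_endpoints_spread (k : ℕ) (hk : 1 ≤ k) (ρ lam₃ : ℝ)
    (hρ0 : 0 < ρ) (hρ1 : ρ ≤ 1) (hlam : 0 < lam₃)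
    (δ₄ : ℝ) (h0 : 0 < δ₄) (h1 : δ₄ < 1) :
    ∃ α₄ : ℝ, 0 < α₄ ∧ ∃ N : ℕ, ∀ (n : ℕ) [NeZero n], N ≤ n →
      1 - δ₄ ≤ lProb n k (fun l =>
        ∀ x : ZMod n, ∃ x' x'' : ZMod n,
          (∃ y : Fin k → ℤ,
              (∀ i, 0 ≤ y i ∧
                y i < (⌈lam₃ * Real.sqrt ρ * (n : ℝ) ^ ((1 : ℝ) / (2 * (k : ℝ) + 2))⌉₊ : ℤ)) ∧
              x' = ((⌊ρ * (n : ℝ) ^ (((k : ℝ) + 2) / ((k : ℝ) + 1))⌋₊ : ℕ) : ZMod n) + fl l y) ∧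
          (∃ y : Fin k → ℤ,
              (∀ i, 0 ≤ y i ∧
                y i < (⌈lam₃ * Real.sqrt ρ * (n : ℝ) ^ ((1 : ℝ) / (2 * (k : ℝ) + 2))⌉₊ : ℤ)) ∧
              x'' = ((⌊ρ * (n : ℝ) ^ (((k : ℝ) + 2) / ((k : ℝ) + 1))⌋₊ : ℕ) : ZMod n) + fl l y) ∧
          ∃ t' t'' : ℤ,
            0 < t' ∧ (t' : ℝ) < α₄ * ρ ^ (-(k : ℝ) / 2) * (n : ℝ) ^ (((k : ℝ) + 2) / (2 * (k : ℝ) + 2)) ∧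
            0 < t'' ∧ (t'' : ℝ) < α₄ * ρ ^ (-(k : ℝ) / 2) * (n : ℝ) ^ (((k : ℝ) + 2) / (2 * (k : ℝ) + 2)) ∧
            x = x' + (t' : ZMod n) ∧ x'' = x + (t'' : ZMod n)) := by
  obtain ⟨A, hA, N, hN⟩ := exists_params k hk (lam₃ * Real.sqrt ρ) δ₄ (by positivity) h0
  refine ⟨A * ρ ^ ((k : ℝ) / 2), by positivity, N, fun n _ hn => ?_⟩
  obtain ⟨M, T, hM, hT, hTn, hMm, hTA, hδ⟩ := hN n hn
  have hα : A * ρ ^ ((k : ℝ) / 2) * ρ ^ (-(k : ℝ) / 2) = A := by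
    rw [mul_assoc, ← Real.rpow_add hρ0, neg_div, add_neg_cancel, Real.rpow_zero, mul_one]
  rw [hα]
  generalize ⌈lam₃ * Real.sqrt ρ * (n : ℝ) ^ ((1 : ℝ) / (2 * (k : ℝ) + 2))⌉₊ = m at hMm ⊢
  generalize ⌊ρ * (n : ℝ) ^ (((k : ℝ) + 2) / ((k : ℝ) + 1))⌋₊ = L
  generalize A * (n : ℝ) ^ (((k : ℝ) + 2) / (2 * (k : ℝ) + 2)) = D at hTA ⊢
  set G : (Fin k → ZMod n) → Prop := fun l => ∀ w, ∃ s ∈ trackBox k M T,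
    ∃ s' ∈ trackBox k M T, trackPoint l s + trackPoint l s' = w with hG
  have hn0 : (0 : ℝ) < n := by exact_mod_cast Nat.pos_of_ne_zero (NeZero.ne n)
  have hMR : (0 : ℝ) < M := by exact_mod_cast hM
  have hTR : (0 : ℝ) < T := by exact_mod_cast hT
  have hcard : Fintype.card (Fin k → ZMod n) = n ^ k := by simp [ZMod.card]
  have hprob : 1 - δ₄ ≤ ((Finset.univ.filter G).card : ℝ) / (Fintype.card (Fin k → ZMod n) : ℝ) := by
    have hbad := card_bad_le (n := n) (k := k) (M := M) hTn
    have hcompl := Finset.card_filter_add_card_filter_not (s := Finset.univ) G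
    rw [Finset.card_univ, hcard] at hcompl
    change (Finset.univ.filter fun l => ¬ G l).card * _ ≤ _ at hbad
    have hbadR : ((Finset.univ.filter fun l => ¬ G l).card : ℝ) * ((M : ℝ) ^ k * T) ^ 2
        ≤ (n : ℝ) ^ k * ((M : ℝ) ^ k * T * ((M : ℝ) ^ k * M + n)) := by exact_mod_cast hbad
    have hcomplR : ((Finset.univ.filter G).card : ℝ)
        + ((Finset.univ.filter fun l => ¬ G l).card : ℝ) = (n : ℝ) ^ k := by
      exact_mod_cast hcompl
    have hle : ((Finset.univ.filter fun l => ¬ G l).card : ℝ) ≤ (n : ℝ) ^ k * δ₄ := by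
      refine le_of_mul_le_mul_right (a := ((M : ℝ) ^ k * T) ^ 2) ?_ (by positivity)
      calc _ ≤ _ := hbadR
        _ ≤ (n : ℝ) ^ k * ((M : ℝ) ^ k * T * (δ₄ * (M ^ k * T))) := by gcongr
        _ = _ := by ring
    rw [hcard, Nat.cast_pow, le_div_iff₀ (by positivity)]
    linarith
  refine hprob.trans ?_
  unfold lProb
  refine div_le_div_of_nonneg_right ?_ (Nat.cast_nonneg _)
  refine Nat.cast_le.2 (Finset.card_le_card ?_)
  intro l hl
  replace hl : G l := (Finset.mem_filter.1 hl).2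
  simp only [Finset.mem_filter, Finset.mem_univ, true_and]
  have key : ∀ w : ZMod n, ∃ y : Fin k → ℤ, (∀ i, 0 ≤ y i ∧ y i < (m : ℤ)) ∧
      ∃ t : ℤ, 0 ≤ t ∧ t < 2 * T - 1 ∧ fl l y + (t : ZMod n) = w := by
    intro w
    obtain ⟨⟨y, t⟩, hs, ⟨y', t'⟩, hs', hE⟩ := hl w
    simp only [trackBox, Finset.mem_product, Fintype.mem_piFinset, Finset.mem_range] at hs hs'
    refine ⟨fun i => (y i : ℤ) + y' i, fun i => ?_, (t : ℤ) + t', by omega, by omega, ?_⟩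
    · have := hs.1 i
      have := hs'.1 i
      constructor <;> dsimp only <;> omega
    · rw [← hE]
      simp only [fl, trackPoint, Int.cast_add, Int.cast_natCast, add_mul, Finset.sum_add_distrib]
      ring
  intro x
  -- Since `0 ≤ t < 2T - 1`, shifting the target by `-1`, respectively by `2T - 1`, makes both
  -- offsets `t₁ + 1` and `2T - 1 - t₂` positive and at most `2T - 1`.
  obtain ⟨y₁, hy₁, t₁, ht₁, ht₁', hE₁⟩ := key (x - L - 1)
  obtain ⟨y₂, hy₂, t₂, ht₂, ht₂', hE₂⟩ := key (x - L + ((2 * T - 1 : ℤ) : ZMod n))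
  have hbd : ∀ t : ℤ, t ≤ 2 * T - 1 → (t : ℝ) < D := fun t ht => by
    have : (t : ℝ) ≤ 2 * T - 1 := by exact_mod_cast ht
    linarith
  refine ⟨_, _, ⟨y₁, hy₁, rfl⟩, ⟨y₂, hy₂, rfl⟩, t₁ + 1, 2 * T - 1 - t₂, by omega,
    hbd _ (by omega), by omega, hbd _ (by omega), ?_, ?_⟩
  · push_cast
    linear_combination -hE₁
  · rw [Int.cast_sub]
    linear_combination hE₂
end
end
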